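/- Let d be a graph pseudometric on a set X with edge set E, let xy ∈ [X]² \ E, let r be a real number with ď(x,y) ≤ r ≤ d̂(x,y), and let D = d ∪ {⟨xy,r⟩}. Then for all u, v ∈ X with d̂(u,v) ≠ D̂(u,v), we have D̂(u,v) = r + d̈(xy,uv) and d̂(u,v) − (d̂(x,y) − r) ≤ D̂(u,v). -/

import Mathlib

open scoped Classical

universe u

namespace GraphMetricPaper

variable {X : Type u}

/-- The vertex set `V = ⋃ E` of a graph given by an adjacency relation `E`. -/
def Vtx (E : X → X → Prop) : Set X := {x | ∃ y, E x y}

/-- Two points are joined by a walk in the graph `E`. -/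
def Joined (E : X → X → Prop) (x y : X) : Prop :=
  ∃ (n : ℕ) (c : ℕ → X), c 0 = x ∧ c n = y ∧ ∀ i, i < n → E (c i) (c (i + 1))

/-- The set of weights of walks from `x` to `y`. -/
def walkSums (E : X → X → Prop) (d : X → X → ℝ) (x y : X) : Set ℝ :=
  {s | ∃ (n : ℕ) (c : ℕ → X), c 0 = x ∧ c n = y ∧ (∀ i, i < n → E (c i) (c (i + 1))) ∧
    s = ∑ i ∈ Finset.range n, d (c i) (c (i + 1))}

/-- The shortest-path pseudometric `d̂` determined by a weight function `d` on a graph `E`. -/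
noncomputable def hatd (E : X → X → Prop) (d : X → X → ℝ) (x y : X) : ℝ :=
  sInf (walkSums E d x y)

/-- The function `ď` bounding the possible extensions of `d` from below:
`ď(x,y) = sup_{ab ∈ E} max {0, d(ab) - d̂(a,x) - d̂(y,b)}`. -/
noncomputable def checkd (E : X → X → Prop) (d : X → X → ℝ) (x y : X) : ℝ :=
  sSup ({0} ∪ {r | ∃ a b, E a b ∧ r = d a b - hatd E d a x - hatd E d y b})

/-- The pseudometric `d̈` on doubletons:
`d̈(xy,uv) = min {d̂(x,u) + d̂(y,v), d̂(x,v) + d̂(y,u)}`. -/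
noncomputable def ddot (E : X → X → Prop) (d : X → X → ℝ) (x y u v : X) : ℝ :=
  min (hatd E d x u + hatd E d y v) (hatd E d x v + hatd E d y u)

/-- `d` is a graph pseudometric with edge relation `E`:  `E` is a (symmetric, irreflexive)
connected graph, `d` is a nonnegative symmetric weight on the edges, and `d = d̂` on edges. -/
structure IsGraphPseudometric (E : X → X → Prop) (d : X → X → ℝ) : Prop where
  symm : ∀ ⦃a b⦄, E a b → E b a
  irrefl : ∀ a, ¬ E a a
  wt_symm : ∀ ⦃a b⦄, E a b → d a b = d b a
  nonneg : ∀ ⦃a b⦄, E a b → 0 ≤ d a b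
  connected : ∀ x ∈ Vtx E, ∀ y ∈ Vtx E, Joined E x y
  edge_eq : ∀ ⦃a b⦄, E a b → d a b = hatd E d a b

/-- A graph metric is a graph pseudometric with strictly positive weights. -/
def IsGraphMetric (E : X → X → Prop) (d : X → X → ℝ) : Prop :=
  IsGraphPseudometric E d ∧ ∀ ⦃a b⦄, E a b → 0 < d a b

/-- A floppy graph pseudometric: `ď(x,y) < d̂(x,y)` for every `xy ∈ [V]² \ E`. -/
def FloppyPseudometric (E : X → X → Prop) (d : X → X → ℝ) : Prop :=
  IsGraphPseudometric E d ∧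
    ∀ x ∈ Vtx E, ∀ y ∈ Vtx E, x ≠ y → ¬ E x y → checkd E d x y < hatd E d x y

/-- A floppy graph metric: `ď(x,y) < d̂(x,y)` for every `xy ∈ [V]² \ E`. -/
def FloppyMetric (E : X → X → Prop) (d : X → X → ℝ) : Prop :=
  IsGraphMetric E d ∧
    ∀ x ∈ Vtx E, ∀ y ∈ Vtx E, x ≠ y → ¬ E x y → checkd E d x y < hatd E d x y

/-- The edge relation of the one-step extension `E ∪ {xy}`. -/
def extEdge (E : X → X → Prop) (x y : X) : X → X → Prop :=
  fun a b => E a b ∨ (a = x ∧ b = y) ∨ (a = y ∧ b = x)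

/-- The weight function of the one-step extension `d ∪ {⟨xy, r⟩}`. -/
noncomputable def extWt (d : X → X → ℝ) (x y : X) (r : ℝ) : X → X → ℝ :=
  fun a b => if (a = x ∧ b = y) ∨ (a = y ∧ b = x) then r else d a b

/-- The set `[V]² \ E` of unordered pairs of distinct vertices that are not edges. -/
def nonEdgePairs (E : X → X → Prop) : Set (Sym2 X) :=
  {e | ∃ a b : X, e = s(a, b) ∧ a ≠ b ∧ a ∈ Vtx E ∧ b ∈ Vtx E ∧ ¬ E a b}

/-- A set of (unordered) weighted pairs, presented as a relation `R`, is a full metric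
on `V`: it is symmetric, its domain is exactly `[V]²`, it is single-valued, positive,
and satisfies the triangle inequality. -/
def IsFullMetricRel (V : Set X) (R : X → X → ℝ → Prop) : Prop :=
  (∀ a b r, R a b r → R b a r) ∧
  (∀ a b r, R a b r → a ∈ V ∧ b ∈ V ∧ a ≠ b) ∧
  (∀ a b, a ∈ V → b ∈ V → a ≠ b → ∃ r, R a b r) ∧
  (∀ a b r s, R a b r → R a b s → r = s) ∧
  (∀ a b r, R a b r → 0 < r) ∧
  (∀ a b c r s t, R a b r → R b c s → R a c t → t ≤ r + s)

/-- A weight function `D` on `[V]²` is a full metric on `V`. -/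
def IsFullMetricOn (V : Set X) (D : X → X → ℝ) : Prop :=
  (∀ a b, a ∈ V → b ∈ V → a ≠ b → D a b = D b a) ∧
  (∀ a b, a ∈ V → b ∈ V → a ≠ b → 0 < D a b) ∧
  (∀ a b c, a ∈ V → b ∈ V → c ∈ V → a ≠ b → b ≠ c → a ≠ c → D a c ≤ D a b + D b c)

/-- Player I has a winning strategy in the metric-extending game `Game_d(lam, Fam)`:
there are functions `S1, S2` choosing, for each inning `β < lam` and each sequence of
previous answers of player II, a legal doubleton in `[V]²` and a set from `Fam`, such that
for every play of player II respecting the strategy, the resulting relation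
`d ∪ {⟨x_α y_α, r_α⟩ : α < lam}` is a full metric on `V`. -/
def WinningStratI (V : Set X) (E : X → X → Prop) (d : X → X → ℝ)
    (lam : Ordinal.{u}) (Fam : Set (Set ℝ)) : Prop :=
  ∃ (S1 : ∀ β : Ordinal.{u}, β < lam → (∀ α : Ordinal.{u}, α < β → ℝ) → X × X)
    (S2 : ∀ β : Ordinal.{u}, β < lam → (∀ α : Ordinal.{u}, α < β → ℝ) → Set ℝ),
    (∀ β hβ s, S2 β hβ s ∈ Fam) ∧
    (∀ β hβ s, (S1 β hβ s).1 ∈ V ∧ (S1 β hβ s).2 ∈ V ∧ (S1 β hβ s).1 ≠ (S1 β hβ s).2) ∧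
    (∀ s : ∀ α : Ordinal.{u}, α < lam → ℝ,
      (∀ α (hα : α < lam), s α hα ∈ S2 α hα (fun γ hγ => s γ (hγ.trans hα))) →
      IsFullMetricRel V (fun a b r =>
        (E a b ∧ r = d a b) ∨
        ∃ α, ∃ hα : α < lam,
          ((a = (S1 α hα (fun γ hγ => s γ (hγ.trans hα))).1 ∧
            b = (S1 α hα (fun γ hγ => s γ (hγ.trans hα))).2) ∨
           (a = (S1 α hα (fun γ hγ => s γ (hγ.trans hα))).2 ∧
            b = (S1 α hα (fun γ hγ => s γ (hγ.trans hα))).1)) ∧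
          r = s α hα))

/-- Player II has a winning strategy in the metric-extending game `Game_d(lam, Fam)`:
there is a function `T` assigning to each inning `β < lam` and each sequence of moves of
player I (of length `β + 1`) an answer in the set component of the last move, such that
for every legal play of player I, the resulting relation is not a full metric on `V`. -/
def WinningStratII (V : Set X) (E : X → X → Prop) (d : X → X → ℝ)
    (lam : Ordinal.{u}) (Fam : Set (Set ℝ)) : Prop :=
  ∃ T : ∀ β : Ordinal.{u}, β < lam → (∀ α : Ordinal.{u}, α ≤ β → (X × X) × Set ℝ) → ℝ,
    (∀ β hβ p, (p β le_rfl).2 ∈ Fam → T β hβ p ∈ (p β le_rfl).2) ∧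
    (∀ p : ∀ α : Ordinal.{u}, α < lam → (X × X) × Set ℝ,
      (∀ α hα, (p α hα).1.1 ∈ V ∧ (p α hα).1.2 ∈ V ∧ (p α hα).1.1 ≠ (p α hα).1.2 ∧
        (p α hα).2 ∈ Fam) →
      ¬ IsFullMetricRel V (fun a b r =>
        (E a b ∧ r = d a b) ∨
        ∃ α, ∃ hα : α < lam,
          ((a = (p α hα).1.1 ∧ b = (p α hα).1.2) ∨
           (a = (p α hα).1.2 ∧ b = (p α hα).1.1)) ∧
          r = T α hα (fun γ hγ => p γ (lt_of_le_of_lt hγ hα))))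

/-- The edge relation of the glued graph `E_d = E_p ∪ ⋃_{f ∈ F} E_f`. -/
def gluedEdge (Ep : X → X → Prop) (F : Set ((X → X → Prop) × (X → X → ℝ))) :
    X → X → Prop :=
  fun a b => Ep a b ∨ ∃ f ∈ F, f.1 a b

/-- `Λ(v; B) = inf {d̂(a,v) + d̂(v,b) - d̂(a,b) : a, b ∈ B}`. -/
noncomputable def Lam (E : X → X → Prop) (d : X → X → ℝ) (v : X) (B : Set X) : ℝ :=
  sInf {r | ∃ a ∈ B, ∃ b ∈ B, r = hatd E d a v + hatd E d v b - hatd E d a b}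

/-- The gluing setup: a graph pseudometric `p = (Ep, wp)` and a family `F` of graph
pseudometrics such that each member meets `V_p`, agrees with `p̂` on the intersection of
the vertex sets, and distinct members only meet inside `V_p`; `wd` is the glued weight
function `d = p ∪ ⋃ F` on `E_d = E_p ∪ ⋃_{f ∈ F} E_f`. -/
structure GluingSetup (Ep : X → X → Prop) (wp : X → X → ℝ)
    (F : Set ((X → X → Prop) × (X → X → ℝ))) (wd : X → X → ℝ) : Prop where
  hp : IsGraphPseudometric Ep wp
  hF : ∀ f ∈ F, IsGraphPseudometric f.1 f.2
  meet : ∀ f ∈ F, (Vtx f.1 ∩ Vtx Ep).Nonempty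
  agree : ∀ f ∈ F, ∀ x ∈ Vtx f.1 ∩ Vtx Ep, ∀ y ∈ Vtx f.1 ∩ Vtx Ep, x ≠ y →
    hatd f.1 f.2 x y = hatd Ep wp x y
  inter_sub : ∀ f ∈ F, ∀ g ∈ F, f ≠ g → Vtx f.1 ∩ Vtx g.1 ⊆ Vtx Ep
  wd_p : ∀ ⦃a b⦄, Ep a b → wd a b = wp a b
  wd_F : ∀ f ∈ F, ∀ ⦃a b⦄, f.1 a b → wd a b = f.2 a b

/-!
Crossing the new edge `xy` more than once never makes a walk cheaper, so `D̂(u,v)` is the minimum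
of `d̂(u,v)`, `d̂(u,x) + r + d̂(y,v)` and `d̂(u,y) + r + d̂(x,v)`. Rather than cutting walks at
`xy`, we regard this minimum as a function of `u`: it is nonpositive at `v` and drops by at most
the weight of an edge along that edge, so it bounds from below the weight of every walk to `v`.
The second estimate is the triangle inequality `d̂(u,v) ≤ d̂(x,y) + d̈(xy,uv)`.
-/

section Walks

variable {E E' : X → X → Prop} {d d' : X → X → ℝ} {a b c u v : X} {s t : ℝ}

theorem walkSums_nonempty_iff : (walkSums E d a b).Nonempty ↔ Joined E a b :=
  ⟨fun ⟨_, n, c, h0, hn, hc, _⟩ => ⟨n, c, h0, hn, hc⟩,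
    fun ⟨n, c, h0, hn, hc⟩ => ⟨_, n, c, h0, hn, hc, rfl⟩⟩

theorem walkSums_subset_walkSums (hE : ∀ ⦃a b⦄, E a b → E' a b)
    (hdd' : ∀ ⦃a b⦄, E a b → d' a b = d a b) (u v : X) :
    walkSums E d u v ⊆ walkSums E' d' u v := by
  rintro _ ⟨n, c, h0, hn, hc, rfl⟩
  exact ⟨n, c, h0, hn, fun i hi => hE (hc i hi),
    Finset.sum_congr rfl fun i hi => (hdd' (hc i (Finset.mem_range.1 hi))).symm⟩

theorem zero_mem_walkSums (a : X) : 0 ∈ walkSums E d a a :=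
  ⟨0, fun _ => a, rfl, rfl, fun i hi => absurd hi i.not_lt_zero, by simp⟩

theorem cons_mem_walkSums (hab : E a b) (hs : s ∈ walkSums E d b c) :
    d a b + s ∈ walkSums E d a c := by
  obtain ⟨n, p, rfl, hn, hp, rfl⟩ := hs
  refine ⟨n + 1, fun i => Nat.casesOn i a p, rfl, hn, ?_, ?_⟩
  · rintro (_ | i) hi
    · exact hab
    · exact hp i (by lia)
  · rw [Finset.sum_range_succ', add_comm]
    rfl

theorem edge_mem_walkSums (hab : E a b) : d a b ∈ walkSums E d a b := by
  simpa using cons_mem_walkSums hab (zero_mem_walkSums b)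

@[elab_as_elim]
theorem walkSums_induction {motive : ∀ (u : X) (s : ℝ), s ∈ walkSums E d u v → Prop}
    (nil : motive v 0 (zero_mem_walkSums v))
    (cons : ∀ {a b s} (hab : E a b) (hs : s ∈ walkSums E d b v), motive b s hs →
      motive a (d a b + s) (cons_mem_walkSums hab hs))
    (hs : s ∈ walkSums E d u v) : motive u s hs := by
  -- `id` keeps `hs`, on which the motive depends.
  obtain ⟨n, c, rfl, rfl, hc, rfl⟩ := id hs
  induction n generalizing c with
  | zero => exact nil
  | succ n ih =>
    have hc' : ∀ i < n, E (c (i + 1)) (c (i + 1 + 1)) := fun i hi => hc (i + 1) (by lia)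
    have tail_mem : ∑ i ∈ Finset.range n, d (c (i + 1)) (c (i + 1 + 1)) ∈
        walkSums E d (c 1) (c (n + 1)) := ⟨n, fun i => c (i + 1), rfl, rfl, hc', rfl⟩
    have h := cons (hc 0 n.succ_pos) tail_mem (ih (fun i => c (i + 1)) nil cons hc' tail_mem)
    convert h using 1
    rw [Finset.sum_range_succ', add_comm]

theorem add_mem_walkSums (hs : s ∈ walkSums E d a b) (ht : t ∈ walkSums E d b c) :
    s + t ∈ walkSums E d a c := by
  induction hs using walkSums_induction with
  | nil => rwa [zero_add]
  | cons hab _ ih =>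
    rw [add_assoc]
    exact cons_mem_walkSums hab ih

theorem walkSums_subset_reverse (hE : ∀ ⦃a b⦄, E a b → E b a)
    (hsymm : ∀ ⦃a b⦄, E a b → d a b = d b a) (a b : X) :
    walkSums E d a b ⊆ walkSums E d b a := by
  intro s hs
  induction hs using walkSums_induction with
  | nil => exact zero_mem_walkSums b
  | cons hac _ ih =>
    rw [hsymm hac, add_comm]
    exact add_mem_walkSums ih (edge_mem_walkSums (hE hac))

theorem nonneg_of_mem_walkSums (hd : ∀ ⦃a b⦄, E a b → 0 ≤ d a b) (hs : s ∈ walkSums E d a b) :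
    0 ≤ s := by
  obtain ⟨n, c, _, _, hc, rfl⟩ := hs
  exact Finset.sum_nonneg fun i hi => hd (hc i (Finset.mem_range.1 hi))

theorem bddBelow_walkSums (hd : ∀ ⦃a b⦄, E a b → 0 ≤ d a b) (a b : X) :
    BddBelow (walkSums E d a b) :=
  ⟨0, fun _ => nonneg_of_mem_walkSums hd⟩

end Walks

section ShortestPath

variable {E E' : X → X → Prop} {d d' : X → X → ℝ} {a b c u v : X} {s : ℝ}

theorem hatd_comm (hE : ∀ ⦃a b⦄, E a b → E b a) (hsymm : ∀ ⦃a b⦄, E a b → d a b = d b a)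
    (a b : X) : hatd E d a b = hatd E d b a :=
  congrArg sInf <|
    (walkSums_subset_reverse hE hsymm a b).antisymm (walkSums_subset_reverse hE hsymm b a)

theorem hatd_nonneg (hd : ∀ ⦃a b⦄, E a b → 0 ≤ d a b) (a b : X) : 0 ≤ hatd E d a b :=
  Real.sInf_nonneg fun _ => nonneg_of_mem_walkSums hd

theorem hatd_le_of_mem_walkSums (hd : ∀ ⦃a b⦄, E a b → 0 ≤ d a b) (hs : s ∈ walkSums E d a b) :
    hatd E d a b ≤ s :=
  csInf_le (bddBelow_walkSums hd a b) hs

theorem hatd_self (hd : ∀ ⦃a b⦄, E a b → 0 ≤ d a b) (a : X) : hatd E d a a = 0 :=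
  (hatd_le_of_mem_walkSums hd (zero_mem_walkSums a)).antisymm (hatd_nonneg hd a a)

theorem hatd_anti (hE : ∀ ⦃a b⦄, E a b → E' a b) (hdd' : ∀ ⦃a b⦄, E a b → d' a b = d a b)
    (hd' : ∀ ⦃a b⦄, E' a b → 0 ≤ d' a b) (huv : Joined E u v) :
    hatd E' d' u v ≤ hatd E d u v :=
  csInf_le_csInf (bddBelow_walkSums hd' u v) (walkSums_nonempty_iff.2 huv)
    (walkSums_subset_walkSums hE hdd' u v)

open scoped Pointwise in
theorem hatd_triangle (hd : ∀ ⦃a b⦄, E a b → 0 ≤ d a b) (hab : Joined E a b)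
    (hbc : Joined E b c) : hatd E d a c ≤ hatd E d a b + hatd E d b c := by
  have hab' := walkSums_nonempty_iff (d := d).2 hab
  have hbc' := walkSums_nonempty_iff (d := d).2 hbc
  have hsub : walkSums E d a b + walkSums E d b c ⊆ walkSums E d a c :=
    Set.add_subset_iff.2 fun _ hs _ ht => add_mem_walkSums hs ht
  calc hatd E d a c
    _ ≤ sInf (walkSums E d a b + walkSums E d b c) :=
        csInf_le_csInf (bddBelow_walkSums hd a c) (hab'.add hbc') hsub
    _ = hatd E d a b + hatd E d b c :=
        csInf_add hab' (bddBelow_walkSums hd a b) hbc' (bddBelow_walkSums hd b c)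

theorem hatd_le_edge_add_hatd (hd : ∀ ⦃a b⦄, E a b → 0 ≤ d a b) (hab : E a b)
    (hbc : Joined E b c) : hatd E d a c ≤ d a b + hatd E d b c := by
  have hle : hatd E d a b ≤ d a b := hatd_le_of_mem_walkSums hd (edge_mem_walkSums hab)
  have hjoined : Joined E a b := walkSums_nonempty_iff.1 ⟨_, edge_mem_walkSums (d := d) hab⟩
  exact (hatd_triangle hd hjoined hbc).trans (by gcongr)

theorem le_hatd_of_le_edge_add {f : X → ℝ} (hv : f v ≤ 0)
    (hf : ∀ ⦃a b⦄, E a b → f a ≤ d a b + f b) (huv : Joined E u v) : f u ≤ hatd E d u v := by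
  refine le_csInf (walkSums_nonempty_iff.2 huv) fun s hs => ?_
  clear huv
  induction hs using walkSums_induction with
  | nil => exact hv
  | cons hab _ ih => exact (hf hab).trans (by gcongr)

theorem hatd_le_hatd_add_ddot (hE : ∀ ⦃a b⦄, E a b → E b a)
    (hsymm : ∀ ⦃a b⦄, E a b → d a b = d b a) (hd : ∀ ⦃a b⦄, E a b → 0 ≤ d a b)
    (hconn : ∀ a b, Joined E a b) (x y u v : X) :
    hatd E d u v ≤ hatd E d x y + ddot E d x y u v := by
  have htri (a b c) : hatd E d a c ≤ hatd E d a b + hatd E d b c :=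
    hatd_triangle hd (hconn a b) (hconn b c)
  have hcomm := hatd_comm hE hsymm
  rw [ddot, ← min_add_add_left]
  refine le_min ?_ ?_
  · linarith [htri u x v, htri x y v, hcomm u x]
  · linarith [htri u y v, htri y x v, hcomm u y, hcomm y x]

theorem checkd_nonneg (E : X → X → Prop) (d : X → X → ℝ) (x y : X) : 0 ≤ checkd E d x y :=
  Real.sSup_nonneg' ⟨0, Or.inl rfl, le_rfl⟩

end ShortestPath

section Extension

variable {E : X → X → Prop} {d : X → X → ℝ} {x y a b : X} {r : ℝ}

theorem extEdge_swap (E : X → X → Prop) (x y : X) : extEdge E y x = extEdge E x y := by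
  ext a b
  simp only [extEdge, or_comm]

theorem extWt_swap (d : X → X → ℝ) (x y : X) (r : ℝ) : extWt d y x r = extWt d x y r := by
  ext a b
  simp only [extWt, or_comm]

theorem extWt_newEdge (d : X → X → ℝ) (x y : X) (r : ℝ) : extWt d x y r x y = r :=
  if_pos (Or.inl ⟨rfl, rfl⟩)

theorem extWt_newEdge_swap (d : X → X → ℝ) (x y : X) (r : ℝ) : extWt d x y r y x = r :=
  if_pos (Or.inr ⟨rfl, rfl⟩)

theorem extWt_of_edge (hxy : ¬ E x y) (hyx : ¬ E y x) (hab : E a b) :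
    extWt d x y r a b = d a b :=
  if_neg <| by rintro (⟨rfl, rfl⟩ | ⟨rfl, rfl⟩) <;> contradiction

theorem extWt_nonneg (hd : ∀ ⦃a b⦄, E a b → 0 ≤ d a b) (hr : 0 ≤ r) (hab : extEdge E x y a b) :
    0 ≤ extWt d x y r a b := by
  unfold extWt
  split_ifs with hnew
  · exact hr
  · exact hd (hab.resolve_right hnew)

theorem Joined.extEdge (hab : Joined E a b) (x y : X) : Joined (extEdge E x y) a b :=
  let ⟨n, c, h0, hn, hc⟩ := hab
  ⟨n, c, h0, hn, fun i hi => Or.inl (hc i hi)⟩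

theorem hatd_ext_le (hd : ∀ ⦃a b⦄, E a b → 0 ≤ d a b) (hxy : ¬ E x y) (hyx : ¬ E y x)
    (hr : 0 ≤ r) (hab : Joined E a b) :
    hatd (extEdge E x y) (extWt d x y r) a b ≤ hatd E d a b :=
  hatd_anti (fun _ _ => Or.inl) (fun _ _ => extWt_of_edge hxy hyx)
    (fun _ _ => extWt_nonneg hd hr) hab

theorem hatd_ext_le_through (hd : ∀ ⦃a b⦄, E a b → 0 ≤ d a b) (hconn : ∀ a b, Joined E a b)
    (hxy : ¬ E x y) (hyx : ¬ E y x) (hr : 0 ≤ r) (u v : X) :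
    hatd (extEdge E x y) (extWt d x y r) u v ≤ hatd E d u x + (r + hatd E d y v) := by
  have hext : ∀ ⦃a b⦄, extEdge E x y a b → 0 ≤ extWt d x y r a b :=
    fun _ _ => extWt_nonneg hd hr
  have hjoined (a b) : Joined (extEdge E x y) a b := (hconn a b).extEdge x y
  have hle (a b) := hatd_ext_le hd hxy hyx hr (hconn a b)
  calc hatd (extEdge E x y) (extWt d x y r) u v
    _ ≤ hatd (extEdge E x y) (extWt d x y r) u x + hatd (extEdge E x y) (extWt d x y r) x v :=
        hatd_triangle hext (hjoined u x) (hjoined x v)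
    _ ≤ hatd (extEdge E x y) (extWt d x y r) u x +
          (extWt d x y r x y + hatd (extEdge E x y) (extWt d x y r) y v) := by
        gcongr
        exact hatd_le_edge_add_hatd hext (Or.inr (Or.inl ⟨rfl, rfl⟩)) (hjoined y v)
    _ ≤ hatd E d u x + (r + hatd E d y v) := by
        rw [extWt_newEdge]
        gcongr
        exacts [hle u x, hle y v]

theorem min_le_hatd_ext (hd : ∀ ⦃a b⦄, E a b → 0 ≤ d a b) (hconn : ∀ a b, Joined E a b)
    (hxy : ¬ E x y) (hyx : ¬ E y x) (hr : 0 ≤ r) (u v : X) :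
    min (hatd E d u v)
        (min (hatd E d u x + (r + hatd E d y v)) (hatd E d u y + (r + hatd E d x v))) ≤
      hatd (extEdge E x y) (extWt d x y r) u v := by
  have hself := hatd_self hd
  have hpos := hatd_nonneg hd
  refine le_hatd_of_le_edge_add (f := fun a => min (hatd E d a v)
    (min (hatd E d a x + (r + hatd E d y v)) (hatd E d a y + (r + hatd E d x v))))
    ((min_le_left _ _).trans_eq (hself v)) ?_ ((hconn u v).extEdge x y)
  rintro a b (hab | ⟨rfl, rfl⟩ | ⟨rfl, rfl⟩)
  · have hstep (c) : hatd E d a c ≤ d a b + hatd E d b c :=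
      hatd_le_edge_add_hatd hd hab (hconn b c)
    simp only [extWt_of_edge hxy hyx hab, ← min_add_add_left, ← add_assoc (d a b)]
    gcongr <;> exact hstep _
  · simp only [extWt_newEdge, hself, zero_add, ← min_add_add_left, le_min_iff]
    refine ⟨?_, ?_, ?_⟩
    · exact (min_le_right _ _).trans (min_le_left _ _)
    · exact (min_le_right _ _).trans ((min_le_left _ _).trans (by linarith [hpos b a]))
    · exact (min_le_left _ _).trans (by linarith)
  · simp only [extWt_newEdge_swap, hself, zero_add, ← min_add_add_left, le_min_iff]
    refine ⟨?_, ?_, ?_⟩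
    · exact (min_le_right _ _).trans (min_le_right _ _)
    · exact (min_le_left _ _).trans (by linarith)
    · exact (min_le_right _ _).trans ((min_le_right _ _).trans (by linarith [hpos b a]))

theorem hatd_ext_eq_min (hd : ∀ ⦃a b⦄, E a b → 0 ≤ d a b) (hconn : ∀ a b, Joined E a b)
    (hxy : ¬ E x y) (hyx : ¬ E y x) (hr : 0 ≤ r) (u v : X) :
    hatd (extEdge E x y) (extWt d x y r) u v = min (hatd E d u v)
      (min (hatd E d u x + (r + hatd E d y v)) (hatd E d u y + (r + hatd E d x v))) := by
  refine le_antisymm (le_min ?_ (le_min ?_ ?_)) (min_le_hatd_ext hd hconn hxy hyx hr u v)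
  · exact hatd_ext_le hd hxy hyx hr (hconn u v)
  · exact hatd_ext_le_through hd hconn hxy hyx hr u v
  · rw [← extEdge_swap, ← extWt_swap]
    exact hatd_ext_le_through hd hconn hyx hxy hr u v

theorem hatd_ext_eq_min_add_ddot (hE : ∀ ⦃a b⦄, E a b → E b a)
    (hsymm : ∀ ⦃a b⦄, E a b → d a b = d b a) (hd : ∀ ⦃a b⦄, E a b → 0 ≤ d a b)
    (hconn : ∀ a b, Joined E a b) (hxy : ¬ E x y) (hr : 0 ≤ r) (u v : X) :
    hatd (extEdge E x y) (extWt d x y r) u v =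
      min (hatd E d u v) (r + ddot E d x y u v) := by
  have hcomm := hatd_comm hE hsymm
  rw [hatd_ext_eq_min hd hconn hxy (fun hyx => hxy (hE hyx)) hr, ddot, ← min_add_add_left]
  congr 2
  · linarith [hcomm u x]
  · linarith [hcomm u y]

end Extension

theorem one_step_extension_estimates₂_general {E : X → X → Prop} {d : X → X → ℝ}
    (hE : ∀ ⦃a b⦄, E a b → E b a) (hsymm : ∀ ⦃a b⦄, E a b → d a b = d b a)
    (hd : ∀ ⦃a b⦄, E a b → 0 ≤ d a b) (hconn : ∀ a b, Joined E a b)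
    {x y : X} (hxy : ¬ E x y) {r : ℝ} (hr : 0 ≤ r) {u v : X}
    (huv : hatd E d u v ≠ hatd (extEdge E x y) (extWt d x y r) u v) :
    hatd (extEdge E x y) (extWt d x y r) u v = r + ddot E d x y u v ∧
      hatd E d u v - (hatd E d x y - r) ≤ hatd (extEdge E x y) (extWt d x y r) u v := by
  have hmin := hatd_ext_eq_min_add_ddot hE hsymm hd hconn hxy hr u v
  have heq : hatd (extEdge E x y) (extWt d x y r) u v = r + ddot E d x y u v :=
    hmin.trans ((min_choice _ _).resolve_left fun h => huv (hmin.trans h).symm)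
  have hle := hatd_le_hatd_add_ddot hE hsymm hd hconn x y u v
  exact ⟨heq, by linarith⟩

/-- With `D = d ∪ {⟨xy, r⟩}` for `ď(x,y) ≤ r ≤ d̂(x,y)`: whenever
`d̂(u,v) ≠ D̂(u,v)`, we have `D̂(u,v) = r + d̈(xy,uv)` and
`d̂(u,v) − (d̂(x,y) − r) ≤ D̂(u,v)`. -/
theorem one_step_extension_estimates₂ (E : X → X → Prop) (d : X → X → ℝ)
    (hd : IsGraphPseudometric E d) (hvert : ∀ z : X, z ∈ Vtx E)
    (x y : X) (hxy : x ≠ y) (hnE : ¬ E x y) (r : ℝ)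
    (hr₁ : checkd E d x y ≤ r) (hr₂ : r ≤ hatd E d x y) :
    ∀ u v : X, hatd E d u v ≠ hatd (extEdge E x y) (extWt d x y r) u v →
      hatd (extEdge E x y) (extWt d x y r) u v = r + ddot E d x y u v ∧
      hatd E d u v - (hatd E d x y - r) ≤ hatd (extEdge E x y) (extWt d x y r) u v := by
  have hr : 0 ≤ r := (checkd_nonneg E d x y).trans hr₁
  exact fun u v => one_step_extension_estimates₂_general hd.symm hd.wt_symm hd.nonneg
    (fun a b => hd.connected a (hvert a) b (hvert b)) hnE hr

end GraphMetricPaper
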